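/- Fix r ∈ (0,1), a unit vector y ∈ ℝ^d, λ ∈ (2r-1, 1) with λ > 0, η > 0, and n ∈ ℕ. For each m and corpus X of unit vectors with |X| = n, define the event G := {for every x ∈ X: if ⟨x,y⟩ ≥ λ + ε_m(λ,η,r) then S_m(x,y) ≥ μ_m(λ), and if ⟨x,y⟩ ≤ λ - ε_m(λ,η,r) then S_m(x,y) ≤ μ_m(λ)}. Then lim_{m→∞} sup_{|X|=n} P(Gᶜ) ≤ n·P(N(0,1) ≥ η). -/

import Mathlib

open MeasureTheory ProbabilityTheory Filter Topology

noncomputable section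

/-- Centered bivariate Gaussian pair `(w, v)` in which `w` and `v` are each standard
normal and `E[w v] = lam`, realized as the law of `(z₁, lam·z₁ + √(1-lam²)·z₂)`
for independent standard normals `z₁, z₂`. -/
def gaussPair (lam : ℝ) : Measure (ℝ × ℝ) :=
  Measure.map (fun z : ℝ × ℝ => (z.1, lam * z.1 + Real.sqrt (1 - lam ^ 2) * z.2))
    ((gaussianReal 0 1).prod (gaussianReal 0 1))

/-- `μ(λ,h) = P(w ≥ h ∧ v ≥ h)`. -/
def mu (lam h : ℝ) : ℝ := (gaussPair lam {p : ℝ × ℝ | h ≤ p.1 ∧ h ≤ p.2}).toReal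

/-- `σ(λ,h) = sqrt(μ(λ,h)(1-μ(λ,h)))`. -/
def sigma' (lam h : ℝ) : ℝ := Real.sqrt (mu lam h * (1 - mu lam h))

/-- The threshold `h_m = sqrt(2 r log m)`. -/
def hthr (r : ℝ) (m : ℕ) : ℝ := Real.sqrt (2 * r * Real.log m)

/-- `μ_m(λ) = μ(λ, h_m)`. -/
def muM (r : ℝ) (m : ℕ) (lam : ℝ) : ℝ := mu lam (hthr r m)

/-- `σ_m(λ) = σ(λ, h_m)`. -/
def sigM (r : ℝ) (m : ℕ) (lam : ℝ) : ℝ := sigma' lam (hthr r m)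

/-- Canonical probability space carrying `m` i.i.d. random vectors in `ℝ^d`
whose coordinates are i.i.d. standard normal: `a_i ω := ω i`. -/
def Prob (d m : ℕ) : Measure (Fin m → Fin d → ℝ) :=
  Measure.pi fun _ => Measure.pi fun _ : Fin d => gaussianReal 0 1

/-- Euclidean inner product on `ℝ^d`. -/
def dotp {d : ℕ} (a x : Fin d → ℝ) : ℝ := ∑ j, a j * x j

/-- `x` lies on the unit sphere `S^{d-1}`. -/
def unitVec {d : ℕ} (x : Fin d → ℝ) : Prop := ∑ j, x j ^ 2 = 1

/-- The score `S_m(x,y) = (1/m) ∑_i 1[⟨a_i,x⟩ ≥ h_m]·1[⟨a_i,y⟩ ≥ h_m]`. -/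
def score (d m : ℕ) (r : ℝ) (x y : Fin d → ℝ) (ω : Fin m → Fin d → ℝ) : ℝ :=
  (1 / (m : ℝ)) * ∑ i, (if hthr r m ≤ dotp (ω i) x then (1 : ℝ) else 0) *
    (if hthr r m ≤ dotp (ω i) y then (1 : ℝ) else 0)

/-- The standard normal cumulative distribution function `Φ`. -/
def Phi (t : ℝ) : ℝ := (gaussianReal 0 1 (Set.Iic t)).toReal

/-- The standard normal upper tail `P(N(0,1) ≥ t)`. -/
def gaussTail (t : ℝ) : ℝ := (gaussianReal 0 1 {z : ℝ | t ≤ z}).toReal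

/-- `ε_m(λ,η,r) = C(λ,r,m,η)·m^{-(λ-(2r-1))/(2(1+λ))}` with
`C = √(2π)·(1+λ)·(1-λ²)^{1/4}·η/√(2r log m)`. -/
def epsm (r lam eta : ℝ) (m : ℕ) : ℝ :=
  (Real.sqrt (2 * Real.pi) * (1 + lam) * (1 - lam ^ 2) ^ ((1 : ℝ) / 4) * eta /
    Real.sqrt (2 * r * Real.log m)) * (m : ℝ) ^ (-(lam - (2 * r - 1)) / (2 * (1 + lam)))

/-!
The score `m * S_m(x, y)` is binomial with success probability `μ_m(⟨x, y⟩)`, and `λ ↦ μ(λ, h)` is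
increasing, so among the documents outside the window the most dangerous ones have
`⟨x, y⟩ = λ ± ε_m`. There the distance from the mean `m * μ_m(λ ± ε_m)` to the cut `m * μ_m(λ)`,
measured in standard deviations, tends to `η`:
by Plackett's identity the derivative of `λ ↦ μ(λ, h)` is the bivariate normal density at `(h, h)`,
which is essentially constant on the window, and Savage's inequality bounds `μ(λ, h)`, hence the
variance, by `(1 + λ)² / h²` times that same density. As the variance tends to infinity, the
triangular central limit theorem bounds each failure probability asymptotically by
`P(N(0,1) ≥ η)`, and a union bound over the `n` documents gives the factor `n`.
-/

open scoped Real unitInterval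

local notation "φ" => gaussianPDFReal 0 1

section GaussianTail

theorem gaussianPDFReal_zero_one_apply (x : ℝ) :
    φ x = (√(2 * π))⁻¹ * Real.exp (-(x ^ 2) / 2) := by
  simp [gaussianPDFReal]

theorem continuous_gaussianPDFReal_zero_one : Continuous φ := by
  unfold gaussianPDFReal; fun_prop

theorem gaussianPDFReal_zero_one_le_one (x : ℝ) : φ x ≤ 1 := by
  rw [gaussianPDFReal_zero_one_apply]
  refine mul_le_one₀ (inv_le_one_of_one_le₀ ?_) (Real.exp_nonneg _) ?_
  · rw [Real.one_le_sqrt]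
    linarith [Real.pi_gt_three]
  · rw [Real.exp_le_one_iff]
    linarith [sq_nonneg x]

-- The exponent `-x²/2` lies below its tangent line at `b`.
theorem gaussianPDFReal_zero_one_le_exp (b x : ℝ) :
    φ x ≤ (√(2 * π))⁻¹ * Real.exp (b ^ 2 / 2 - b * x) := by
  rw [gaussianPDFReal_zero_one_apply]
  gcongr
  linarith [sq_nonneg (x - b)]

theorem integrable_gaussianReal_zero_one_iff (f : ℝ → ℝ) :
    Integrable f (gaussianReal 0 1) ↔ Integrable fun w => φ w * f w := by
  rw [gaussianReal_of_var_ne_zero 0 one_ne_zero,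
    integrable_withDensity_iff_integrable_smul' (measurable_gaussianPDF 0 1)
      (Eventually.of_forall fun _ => gaussianPDF_lt_top)]
  simp only [toReal_gaussianPDF, smul_eq_mul]

theorem setIntegral_Ici_gaussianReal_zero_one (f : ℝ → ℝ) (h : ℝ) :
    ∫ w in Set.Ici h, f w ∂(gaussianReal 0 1) = ∫ w in Set.Ioi h, φ w * f w := by
  rw [← integral_indicator measurableSet_Ici,
    integral_gaussianReal_eq_integral_smul one_ne_zero, ← integral_Ici_eq_integral_Ioi,
    ← integral_indicator measurableSet_Ici]
  congr 1 with w
  by_cases hw : w ∈ Set.Ici h <;> simp [hw]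

theorem gaussTail_eq_integral (t : ℝ) : gaussTail t = ∫ w in Set.Ioi t, φ w := by
  have h := setIntegral_Ici_gaussianReal_zero_one (fun _ => 1) t
  simp only [mul_one] at h
  rw [← h]
  simp [gaussTail, Measure.real, Set.Ici]

theorem gaussTail_nonneg (t : ℝ) : 0 ≤ gaussTail t := ENNReal.toReal_nonneg

theorem gaussTail_le_one (t : ℝ) : gaussTail t ≤ 1 := measureReal_le_one

theorem hasDerivAt_gaussTail (t : ℝ) : HasDerivAt gaussTail (-φ t) t := by
  have hint : Integrable φ := integrable_gaussianPDFReal 0 1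
  have heq : gaussTail = fun s => gaussTail 0 - ∫ w in (0 : ℝ)..s, φ w := by
    ext s
    rw [gaussTail_eq_integral, gaussTail_eq_integral,
      ← intervalIntegral.integral_Ioi_sub_Ioi' hint.integrableOn hint.integrableOn]
    ring
  rw [heq]
  exact (intervalIntegral.integral_hasDerivAt_right hint.intervalIntegrable
    (continuous_gaussianPDFReal_zero_one.stronglyMeasurableAtFilter _ _)
    continuous_gaussianPDFReal_zero_one.continuousAt).const_sub _

theorem continuous_gaussTail : Continuous gaussTail :=
  continuous_iff_continuousAt.2 fun t => (hasDerivAt_gaussTail t).continuousAt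

theorem gaussTail_le_exp {b : ℝ} (hb : 0 < b) (x : ℝ) :
    gaussTail x ≤ (√(2 * π))⁻¹ * Real.exp (b ^ 2 / 2 - b * x) / b := by
  have hint : IntegrableOn (fun z => Real.exp (-b * z)) (Set.Ioi x) :=
    integrableOn_exp_mul_Ioi (neg_neg_of_pos hb) x
  calc gaussTail x = ∫ z in Set.Ioi x, φ z := gaussTail_eq_integral x
    _ ≤ ∫ z in Set.Ioi x, (√(2 * π))⁻¹ * Real.exp (b ^ 2 / 2) * Real.exp (-b * z) := by
      refine setIntegral_mono (integrable_gaussianPDFReal 0 1).integrableOn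
        (hint.const_mul _) fun z => ?_
      rw [mul_assoc, ← Real.exp_add, neg_mul, ← sub_eq_add_neg]
      exact gaussianPDFReal_zero_one_le_exp b z
    _ = (√(2 * π))⁻¹ * Real.exp (b ^ 2 / 2 - b * x) / b := by
      rw [integral_const_mul, integral_exp_mul_Ioi (neg_neg_of_pos hb), neg_div_neg_eq,
        mul_div_assoc', mul_assoc, ← Real.exp_add, neg_mul, ← sub_eq_add_neg]

theorem tendsto_gaussTail_atTop : Tendsto gaussTail atTop (𝓝 0) := by
  have hexp : Tendsto (fun x : ℝ => Real.exp (1 ^ 2 / 2 - 1 * x)) atTop (𝓝 0) := by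
    simp only [one_mul, sub_eq_add_neg]
    exact Real.tendsto_exp_atBot.comp
      (tendsto_atBot_add_const_left _ _ tendsto_neg_atTop_atBot)
  refine squeeze_zero gaussTail_nonneg (gaussTail_le_exp one_pos) ?_
  simpa using hexp.const_mul (√(2 * π))⁻¹

theorem exists_lt_gaussTail_lt {eta G : ℝ} (heta : 0 < eta) (hG : gaussTail eta < G) :
    ∃ eta', 0 < eta' ∧ eta' < eta ∧ gaussTail eta' < G := by
  have hnear : ∀ᶠ s in 𝓝[<] eta, gaussTail s < G :=
    nhdsWithin_le_nhds ((continuous_gaussTail.tendsto eta).eventually_lt_const hG)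
  obtain ⟨s, hsG, hs⟩ := (hnear.and (Ioo_mem_nhdsLT heta)).exists
  exact ⟨s, hs.1, hs.2, hsG⟩

theorem gaussianReal_zero_one_Iic_neg (t : ℝ) :
    gaussianReal 0 1 (Set.Iic (-t)) = gaussianReal 0 1 (Set.Ici t) := by
  have hneg : (gaussianReal 0 1).map (fun x => -x) = gaussianReal 0 1 := by
    simpa using gaussianReal_map_neg (μ := 0) (v := 1)
  calc gaussianReal 0 1 (Set.Iic (-t))
      = (gaussianReal 0 1).map (fun x => -x) (Set.Iic (-t)) := by rw [hneg]
    _ = gaussianReal 0 1 (Set.Ici t) := by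
      rw [Measure.map_apply measurable_neg measurableSet_Iic]
      congr 1 with z
      simp

end GaussianTail

section OrthantProbability

theorem measurableSet_quadrant (h : ℝ) : MeasurableSet {p : ℝ × ℝ | h ≤ p.1 ∧ h ≤ p.2} := by
  measurability

theorem one_sub_sq_pos {t : ℝ} (ht : t ∈ Set.Ioo (-1) 1) : 0 < 1 - t ^ 2 := by
  nlinarith [ht.1, ht.2]

theorem mu_eq_prod (t h : ℝ) :
    mu t h = ((gaussianReal 0 1).prod (gaussianReal 0 1)
      {z : ℝ × ℝ | h ≤ z.1 ∧ h ≤ t * z.1 + √(1 - t ^ 2) * z.2}).toReal := by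
  rw [mu, gaussPair, Measure.map_apply (by fun_prop) (measurableSet_quadrant h)]
  rfl

theorem mu_nonneg (t h : ℝ) : 0 ≤ mu t h := ENNReal.toReal_nonneg

theorem gaussTail_eq_prod (h : ℝ) :
    gaussTail h =
      ((gaussianReal 0 1).prod (gaussianReal 0 1) {z : ℝ × ℝ | h ≤ z.1}).toReal := by
  have hprod : {z : ℝ × ℝ | h ≤ z.1} = {z : ℝ | h ≤ z} ×ˢ Set.univ := by ext; simp
  rw [hprod, Measure.prod_prod, measure_univ, mul_one, gaussTail]

theorem mu_le_gaussTail (t h : ℝ) : mu t h ≤ gaussTail h := by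
  rw [mu_eq_prod, gaussTail_eq_prod]
  exact ENNReal.toReal_mono (measure_ne_top _ _) (measure_mono fun z hz => hz.1)

theorem mu_mem_unitInterval (t h : ℝ) : mu t h ∈ I :=
  ⟨mu_nonneg t h, (mu_le_gaussTail t h).trans (gaussTail_le_one h)⟩

theorem mu_one (h : ℝ) : mu 1 h = gaussTail h := by
  rw [mu_eq_prod, gaussTail_eq_prod]
  simp

theorem mu_neg_one {h : ℝ} (hh : 0 < h) : mu (-1) h = 0 := by
  have hempty : {z : ℝ × ℝ | h ≤ z.1 ∧ h ≤ -1 * z.1 + √(1 - (-1) ^ 2) * z.2} = ∅ := by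
    ext z
    simp only [even_two, Even.neg_pow, one_pow, sub_self, Real.sqrt_zero, zero_mul, add_zero,
      Set.mem_ofPred_eq, Set.mem_empty_iff_false, iff_false, not_and, not_le]
    intro hz
    linarith
  rw [mu_eq_prod, hempty, measure_empty, ENNReal.toReal_zero]

theorem mu_eq_integral {t : ℝ} (ht : t ∈ Set.Ioo (-1) 1) (h : ℝ) :
    mu t h = ∫ w in Set.Ici h, gaussTail ((h - t * w) / √(1 - t ^ 2)) ∂(gaussianReal 0 1) := by
  have hc : 0 < √(1 - t ^ 2) := Real.sqrt_pos.2 (one_sub_sq_pos ht)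
  have hmeas : MeasurableSet {z : ℝ × ℝ | h ≤ z.1 ∧ h ≤ t * z.1 + √(1 - t ^ 2) * z.2} :=
    (measurableSet_le measurable_const measurable_fst).inter
      (measurableSet_le measurable_const
        ((measurable_fst.const_mul t).add (measurable_snd.const_mul _)))
  rw [mu_eq_prod, Measure.prod_apply hmeas, integral_eq_lintegral_of_nonneg_ae
    (Eventually.of_forall fun _ => gaussTail_nonneg _)
    (continuous_gaussTail.comp (by fun_prop)).aestronglyMeasurable,
    ← lintegral_indicator measurableSet_Ici]
  congr 2 with w
  by_cases hw : h ≤ w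
  · rw [Set.indicator_of_mem (Set.mem_Ici.2 hw), gaussTail,
      ENNReal.ofReal_toReal (measure_ne_top _ _)]
    congr 1 with z
    simp only [Set.mem_preimage, Set.mem_ofPred_eq, hw, true_and, div_le_iff₀ hc,
      sub_le_iff_le_add', mul_comm z]
  · rw [Set.indicator_of_notMem (by simpa using hw)]
    simp [hw]

/-- The density at `(h, h)` of the bivariate Gaussian pair with correlation `t`; by Plackett's
identity it is the derivative of `t ↦ mu t h`. -/
def plackettDensity (h t : ℝ) : ℝ := Real.exp (-(h ^ 2) / (1 + t)) / (2 * π * √(1 - t ^ 2))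

theorem plackettDensity_pos {h t : ℝ} (ht : t ∈ Set.Ioo (-1) 1) : 0 < plackettDensity h t := by
  have hc := one_sub_sq_pos ht
  unfold plackettDensity
  positivity

theorem gaussianPDFReal_mul_conditional {t : ℝ} (ht : t ∈ Set.Ioo (-1) 1) (h w : ℝ) :
    φ w * φ ((h - t * w) / √(1 - t ^ 2)) =
      (2 * π)⁻¹ * Real.exp (-(w ^ 2 + h ^ 2 - 2 * t * w * h) / (2 * (1 - t ^ 2))) := by
  have hc : 0 < 1 - t ^ 2 := one_sub_sq_pos ht
  have hexp : -(w ^ 2) / 2 + -(((h - t * w) / √(1 - t ^ 2)) ^ 2) / 2 =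
      -(w ^ 2 + h ^ 2 - 2 * t * w * h) / (2 * (1 - t ^ 2)) := by
    rw [div_pow, Real.sq_sqrt hc.le]
    field_simp
    ring
  rw [gaussianPDFReal_zero_one_apply, gaussianPDFReal_zero_one_apply, mul_mul_mul_comm,
    ← Real.exp_add, hexp, ← mul_inv, Real.mul_self_sqrt (by positivity)]

theorem tendsto_exp_neg_quadratic_atTop (a b : ℝ) {c : ℝ} (hc : 0 < c) :
    Tendsto (fun w : ℝ => Real.exp (-(w ^ 2 + a - b * w) / c)) atTop (𝓝 0) := by
  have hquad : Tendsto (fun w : ℝ => w * (w - b) + a) atTop atTop :=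
    tendsto_atTop_add_const_right _ _
      (tendsto_id.atTop_mul_atTop₀ (tendsto_atTop_add_const_right _ _ tendsto_id))
  refine (Real.tendsto_exp_atBot.comp
    ((tendsto_neg_atTop_atBot.comp hquad).atBot_div_const hc)).congr fun w => ?_
  simp only [Function.comp_apply]
  ring_nf

theorem abs_gaussianPDFReal_mul_le {c x : ℝ} (hc : c < 1) (hx : |x| ≤ c) (w h : ℝ) :
    |φ ((h - x * w) / √(1 - x ^ 2)) * ((w - x * h) / √(1 - x ^ 2) ^ 3)| ≤
      (|w| + |h|) / √(1 - c ^ 2) ^ 3 := by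
  have hc2 : 0 < 1 - c ^ 2 := by nlinarith [abs_nonneg x]
  have hcx : 1 - c ^ 2 ≤ 1 - x ^ 2 := by
    rw [← sq_abs x]
    nlinarith [abs_nonneg x]
  have hnum : |w - x * h| ≤ |w| + |h| := by
    refine (abs_sub _ _).trans ?_
    rw [abs_mul]
    nlinarith [abs_nonneg h]
  calc |φ ((h - x * w) / √(1 - x ^ 2)) * ((w - x * h) / √(1 - x ^ 2) ^ 3)|
      = φ ((h - x * w) / √(1 - x ^ 2)) * (|w - x * h| / √(1 - x ^ 2) ^ 3) := by
        rw [abs_mul, abs_div, abs_of_nonneg (gaussianPDFReal_nonneg 0 1 _), abs_pow,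
          abs_of_nonneg (Real.sqrt_nonneg _)]
    _ ≤ |w - x * h| / √(1 - x ^ 2) ^ 3 :=
        mul_le_of_le_one_left (by positivity) (gaussianPDFReal_zero_one_le_one _)
    _ ≤ (|w| + |h|) / √(1 - c ^ 2) ^ 3 := by gcongr

theorem integrable_abs_add_div_gaussianReal (a b : ℝ) :
    Integrable (fun w => (|w| + a) / b) (gaussianReal 0 1) :=
  ((IsGaussian.integrable_fun_id (μ := gaussianReal 0 1)).abs.add (integrable_const a)).div_const b

theorem integrable_gaussianPDFReal_mul {t : ℝ} (ht : t ∈ Set.Ioo (-1) 1) (h : ℝ) :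
    Integrable (fun w => φ ((h - t * w) / √(1 - t ^ 2)) * ((w - t * h) / √(1 - t ^ 2) ^ 3))
      (gaussianReal 0 1) :=
  (integrable_abs_add_div_gaussianReal |h| _).mono'
    ((continuous_gaussianPDFReal_zero_one.comp (by fun_prop)).mul
      (by fun_prop)).aestronglyMeasurable
    (Eventually.of_forall fun w => abs_gaussianPDFReal_mul_le (abs_lt.2 ht) le_rfl w h)

-- The integrand is the derivative in `w` of minus the joint density at `(w, h)`.
theorem integral_gaussianPDFReal_mul_eq_plackettDensity {t : ℝ} (ht : t ∈ Set.Ioo (-1) 1)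
    (h : ℝ) :
    ∫ w in Set.Ici h, φ ((h - t * w) / √(1 - t ^ 2)) * ((w - t * h) / √(1 - t ^ 2) ^ 3)
      ∂(gaussianReal 0 1) = plackettDensity h t := by
  have hc : 0 < 1 - t ^ 2 := one_sub_sq_pos ht
  have ht1 : 0 < 1 + t := by linarith [ht.1]
  set c := √(1 - t ^ 2) with hcdef
  have hc0 : 0 < c := Real.sqrt_pos.2 hc
  have hc2 : c ^ 2 = 1 - t ^ 2 := Real.sq_sqrt hc.le
  set E : ℝ → ℝ := fun w => Real.exp (-(w ^ 2 + h ^ 2 - 2 * t * w * h) / (2 * c ^ 2)) with hE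
  have hprod (w : ℝ) : φ w * (φ ((h - t * w) / c) * ((w - t * h) / c ^ 3)) =
      (2 * π)⁻¹ * E w * ((w - t * h) / c ^ 3) := by
    rw [← mul_assoc, gaussianPDFReal_mul_conditional ht, hE, hc2]
  have hderiv (w : ℝ) : HasDerivAt (fun w => -((2 * π * c)⁻¹ * E w))
      (φ w * (φ ((h - t * w) / c) * ((w - t * h) / c ^ 3))) w := by
    have hquad := ((((hasDerivAt_pow 2 w).add_const (h ^ 2)).sub
      (((hasDerivAt_id w).const_mul (2 * t)).mul_const h)).neg.div_const (2 * c ^ 2)).exp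
    convert! (hquad.const_mul (2 * π * c)⁻¹).neg using 1
    rw [hprod]
    simp only [hE, Pi.neg_apply, Pi.sub_apply, id]
    field_simp
    ring
  have hlim : Tendsto (fun w => -((2 * π * c)⁻¹ * E w)) atTop (𝓝 0) := by
    have hE0 := tendsto_exp_neg_quadratic_atTop (h ^ 2) (2 * t * h) (c := 2 * c ^ 2) (by positivity)
    simpa [hE, mul_right_comm] using (hE0.const_mul (2 * π * c)⁻¹).neg
  have hEh : -(h ^ 2 + h ^ 2 - 2 * t * h * h) / (2 * c ^ 2) = -(h ^ 2) / (1 + t) := by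
    rw [div_eq_div_iff (by positivity) ht1.ne', hc2]
    ring
  rw [setIntegral_Ici_gaussianReal_zero_one,
    integral_Ioi_of_hasDerivAt_of_tendsto' (fun w _ => hderiv w)
      ((integrable_gaussianReal_zero_one_iff _).1
        (integrable_gaussianPDFReal_mul ht h)).integrableOn hlim, plackettDensity,
    ← hcdef, zero_sub, neg_neg, ← hEh, div_eq_inv_mul]

theorem hasDerivAt_sub_mul_div_sqrt {t : ℝ} (ht : t ∈ Set.Ioo (-1) 1) (h w : ℝ) :
    HasDerivAt (fun t => (h - t * w) / √(1 - t ^ 2)) (-((w - t * h) / √(1 - t ^ 2) ^ 3)) t := by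
  have hct : 0 < 1 - t ^ 2 := one_sub_sq_pos ht
  have hc : 0 < √(1 - t ^ 2) := Real.sqrt_pos.2 hct
  have hnum : HasDerivAt (fun t : ℝ => h - t * w) (-w) t := by
    simpa using ((hasDerivAt_id t).mul_const w).const_sub h
  have hden : HasDerivAt (fun t : ℝ => 1 - t ^ 2) (-(2 * t)) t := by
    simpa using (hasDerivAt_pow 2 t).const_sub 1
  convert! hnum.div (hden.sqrt hct.ne') hc.ne' using 1
  field_simp
  rw [Real.sq_sqrt hct.le]
  ring

theorem hasDerivAt_mu {t : ℝ} (ht : t ∈ Set.Ioo (-1) 1) (h : ℝ) :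
    HasDerivAt (fun t => mu t h) (plackettDensity h t) t := by
  obtain ⟨c, htc, hc1⟩ := exists_between (abs_lt.2 ht)
  have hball : Metric.ball 0 c ∈ 𝓝 t := Metric.isOpen_ball.mem_nhds (by simpa using htc)
  have hlt {x : ℝ} (hx : x ∈ Metric.ball 0 c) : |x| < c := by simpa using hx
  have hmem {x : ℝ} (hx : x ∈ Metric.ball 0 c) : x ∈ Set.Ioo (-1) 1 :=
    abs_lt.1 ((hlt hx).trans hc1)
  have hcont (x : ℝ) : Continuous fun w => gaussTail ((h - x * w) / √(1 - x ^ 2)) :=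
    continuous_gaussTail.comp (by fun_prop)
  have hkey := hasDerivAt_integral_of_dominated_loc_of_deriv_le
    (μ := (gaussianReal 0 1).restrict (Set.Ici h))
    (F := fun t w => gaussTail ((h - t * w) / √(1 - t ^ 2)))
    (F' := fun t w => φ ((h - t * w) / √(1 - t ^ 2)) * ((w - t * h) / √(1 - t ^ 2) ^ 3))
    (bound := fun w => (|w| + |h|) / √(1 - c ^ 2) ^ 3) hball
    (Eventually.of_forall fun x => (hcont x).aestronglyMeasurable)
    (Integrable.of_bound (hcont t).aestronglyMeasurable 1 (Eventually.of_forall fun w => by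
      rw [Real.norm_of_nonneg (gaussTail_nonneg _)]
      exact gaussTail_le_one _))
    (integrable_gaussianPDFReal_mul ht h).restrict.aestronglyMeasurable
    (Eventually.of_forall fun w x hx => abs_gaussianPDFReal_mul_le hc1 (hlt hx).le w h)
    (integrable_abs_add_div_gaussianReal |h| _).restrict
    (Eventually.of_forall fun w x hx => by
      convert! (hasDerivAt_gaussTail _).comp x (hasDerivAt_sub_mul_div_sqrt (hmem hx) h w) using 1
      ring)
  rw [← integral_gaussianPDFReal_mul_eq_plackettDensity ht h]
  refine hkey.2.congr_of_eventuallyEq ?_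
  filter_upwards [hball] with x hx using mu_eq_integral (hmem hx) h

theorem exists_mu_sub_eq {a b : ℝ} (ha : -1 < a) (hab : a < b) (hb : b < 1) (h : ℝ) :
    ∃ t ∈ Set.Ioo a b, mu b h - mu a h = (b - a) * plackettDensity h t := by
  have hderiv (t : ℝ) (ht : t ∈ Set.Icc a b) :
      HasDerivAt (fun t => mu t h) (plackettDensity h t) t :=
    hasDerivAt_mu ⟨ha.trans_le ht.1, ht.2.trans_lt hb⟩ h
  obtain ⟨t, ht, heq⟩ := exists_hasDerivAt_eq_slope (fun t => mu t h) (plackettDensity h) hab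
    (fun t ht => (hderiv t ht).continuousAt.continuousWithinAt)
    (fun t ht => hderiv t (Set.Ioo_subset_Icc_self ht))
  refine ⟨t, ht, ?_⟩
  rw [heq, mul_div_cancel₀ _ (sub_pos.2 hab).ne']

theorem monotoneOn_mu {h : ℝ} (hh : 0 < h) : MonotoneOn (fun t => mu t h) (Set.Icc (-1) 1) := by
  intro a ha b hb hab
  rcases hab.eq_or_lt with rfl | hab
  · rfl
  rcases hb.2.eq_or_lt with rfl | hb1
  · exact (mu_le_gaussTail a h).trans_eq (mu_one h).symm
  rcases ha.1.eq_or_lt with rfl | ha1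
  · exact (mu_neg_one hh).trans_le (mu_nonneg b h)
  obtain ⟨t, ht, heq⟩ := exists_mu_sub_eq ha1 hab hb1 h
  rw [← sub_nonneg, heq]
  exact mul_nonneg (sub_pos.2 hab).le
    (plackettDensity_pos ⟨ha1.trans ht.1, ht.2.trans hb1⟩).le

theorem exp_div_le_plackettDensity {h a t : ℝ} (ha : -1 < a) (hat : a ≤ t) (ht : t < 1) :
    Real.exp (-(h ^ 2) / (1 + a)) / (2 * π) ≤ plackettDensity h t := by
  have hc : 0 < 1 - t ^ 2 := one_sub_sq_pos ⟨ha.trans_le hat, ht⟩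
  have ha1 : 0 < 1 + a := by linarith
  have hsqrt : √(1 - t ^ 2) ≤ 1 := Real.sqrt_le_one.2 (by linarith [sq_nonneg t])
  have hexp : -(h ^ 2) / (1 + a) ≤ -(h ^ 2) / (1 + t) := by
    rw [neg_div, neg_div, neg_le_neg_iff]
    gcongr
  unfold plackettDensity
  refine div_le_div₀ (Real.exp_nonneg _) (Real.exp_le_exp.2 hexp) (by positivity) ?_
  exact mul_le_of_le_one_right (by positivity) hsqrt

theorem mul_exp_le_mu {a b : ℝ} (ha : -1 < a) (hab : a < b) (hb : b < 1) (h : ℝ) :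
    (b - a) * (Real.exp (-(h ^ 2) / (1 + a)) / (2 * π)) ≤ mu b h := by
  obtain ⟨t, ht, heq⟩ := exists_mu_sub_eq ha hab hb h
  calc (b - a) * (Real.exp (-(h ^ 2) / (1 + a)) / (2 * π))
      ≤ (b - a) * plackettDensity h t :=
        mul_le_mul_of_nonneg_left (exp_div_le_plackettDensity ha ht.1.le (ht.2.trans hb))
          (sub_pos.2 hab).le
    _ = mu b h - mu a h := heq.symm
    _ ≤ mu b h := sub_le_self _ (mu_nonneg a h)

-- Both Gaussian exponents are bounded by tangent lines that meet at the corner `(h, h)`.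
theorem gaussianPDFReal_mul_gaussTail_le {t h : ℝ} (ht : t ∈ Set.Ioo (-1) 1) (hh : 0 < h) (w : ℝ) :
    φ w * gaussTail ((h - t * w) / √(1 - t ^ 2)) ≤
      (2 * π * (h / (1 + t) * √(1 - t ^ 2)))⁻¹ * Real.exp (-(h / (1 + t)) * w) := by
  have hct : 0 < 1 - t ^ 2 := one_sub_sq_pos ht
  have ht1 : 0 < 1 + t := by linarith [ht.1]
  set c := √(1 - t ^ 2)
  have hc : 0 < c := Real.sqrt_pos.2 hct
  have hc2 : c ^ 2 = 1 - t ^ 2 := Real.sq_sqrt hct.le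
  set a := h / (1 + t) with ha
  have hexp : h ^ 2 / 2 - h * w + ((a * c) ^ 2 / 2 - a * c * ((h - t * w) / c)) = -a * w := by
    rw [mul_assoc a c, mul_div_cancel₀ _ hc.ne', mul_pow, hc2, ha]
    field_simp
    ring
  have hsq : (√(2 * π))⁻¹ * (√(2 * π))⁻¹ = (2 * π)⁻¹ := by
    rw [← mul_inv, Real.mul_self_sqrt (by positivity)]
  calc φ w * gaussTail ((h - t * w) / c)
      ≤ ((√(2 * π))⁻¹ * Real.exp (h ^ 2 / 2 - h * w)) * ((√(2 * π))⁻¹ *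
        Real.exp ((a * c) ^ 2 / 2 - a * c * ((h - t * w) / c)) / (a * c)) :=
        mul_le_mul (gaussianPDFReal_zero_one_le_exp h w) (gaussTail_le_exp (by positivity) _)
          (gaussTail_nonneg _) (by positivity)
    _ = (2 * π * (a * c))⁻¹ * Real.exp (-a * w) := by
        rw [← hexp, Real.exp_add, mul_inv (2 * π), ← hsq]
        ring

theorem mu_le_plackettDensity {t h : ℝ} (ht : t ∈ Set.Ioo (-1) 1) (hh : 0 < h) :
    mu t h ≤ (1 + t) ^ 2 / h ^ 2 * plackettDensity h t := by
  have ht1 : 0 < 1 + t := by linarith [ht.1]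
  set c := √(1 - t ^ 2) with hc
  set a := h / (1 + t) with ha
  have ha0 : 0 < a := by positivity
  calc mu t h = ∫ w in Set.Ioi h, φ w * gaussTail ((h - t * w) / c) := by
        rw [mu_eq_integral ht, setIntegral_Ici_gaussianReal_zero_one]
    _ ≤ ∫ w in Set.Ioi h, (2 * π * (a * c))⁻¹ * Real.exp (-a * w) :=
        integral_mono_of_nonneg (Eventually.of_forall fun w =>
          mul_nonneg (gaussianPDFReal_nonneg 0 1 w) (gaussTail_nonneg _))
          ((integrableOn_exp_mul_Ioi (neg_neg_of_pos ha0) h).const_mul _)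
          (Eventually.of_forall (gaussianPDFReal_mul_gaussTail_le ht hh))
    _ = (2 * π * (a * c))⁻¹ * (Real.exp (-a * h) / a) := by
        rw [integral_const_mul, integral_exp_mul_Ioi (neg_neg_of_pos ha0), neg_div_neg_eq]
    _ = (1 + t) ^ 2 / h ^ 2 * plackettDensity h t := by
        have hah : -a * h = -(h ^ 2) / (1 + t) := by rw [ha]; ring
        rw [hah, plackettDensity, ← hc, ha]
        field_simp

end OrthantProbability

section Binomial

variable {m : ℕ}

theorem charFun_map_cast_binomial (p : I) (t : ℝ) :
    charFun Bin(ℝ, m, p) t = (p * Complex.exp (t * Complex.I) + (1 - p)) ^ m := by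
  rw [charFun_apply_real, integral_map_cast_binomial, add_pow, ← Nat.range_succ_eq_Iic]
  refine Finset.sum_congr rfl fun k _ => ?_
  have hexp : Complex.exp (t * (k : ℝ) * Complex.I) = Complex.exp (t * Complex.I) ^ k := by
    rw [← Complex.exp_nat_mul]
    congr 1
    push_cast
    ring
  rw [hexp, Complex.real_smul]
  push_cast
  ring

theorem charFun_map_indicator_one {α : Type*} [MeasurableSpace α] (P : Measure α)
    [IsProbabilityMeasure P] {A : Set α} (hA : MeasurableSet A) (t : ℝ) :
    charFun (P.map (A.indicator (1 : α → ℝ))) t =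
      P.real A * Complex.exp (t * Complex.I) + (1 - P.real A) := by
  have hA1 : Measurable (A.indicator (1 : α → ℝ)) := measurable_one.indicator hA
  have hsplit (a : α) : Complex.exp (t * (A.indicator (1 : α → ℝ) a : ℝ) * Complex.I) =
      A.indicator (fun _ => Complex.exp (t * Complex.I) - 1) a + 1 := by
    by_cases ha : a ∈ A <;> simp [ha]
  rw [charFun_apply_real, integral_map hA1.aemeasurable (by fun_prop)]
  simp_rw [hsplit]
  rw [integral_add ((integrable_const _).indicator hA) (integrable_const _),
    integral_indicator_const _ hA]
  simp only [Complex.real_smul, integral_const, probReal_univ, one_smul]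
  ring

theorem map_sum_indicator_pi {α : Type*} [MeasurableSpace α] (P : Measure α)
    [IsProbabilityMeasure P] {A : Set α} (hA : MeasurableSet A) {p : I} (hp : P.real A = p) :
    (Measure.pi fun _ : Fin m => P).map (fun ω => ∑ i, A.indicator (1 : α → ℝ) (ω i)) =
      Bin(ℝ, m, p) := by
  have hA1 : Measurable (A.indicator (1 : α → ℝ)) := measurable_one.indicator hA
  have : IsProbabilityMeasure (P.map (A.indicator (1 : α → ℝ))) :=
    Measure.isProbabilityMeasure_map hA1.aemeasurable
  have hcomp : (Measure.pi fun _ : Fin m => P).map (fun ω => ∑ i, A.indicator (1 : α → ℝ) (ω i)) =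
      (Measure.pi fun _ : Fin m => P.map (A.indicator (1 : α → ℝ))).map (fun u => ∑ i, u i) := by
    rw [← Measure.pi_map_pi fun _ => hA1.aemeasurable,
      Measure.map_map (by fun_prop) (by fun_prop)]
    rfl
  refine Measure.ext_of_charFun ?_
  ext t
  rw [hcomp, charFun_map_sum_pi_eq_prod, charFun_map_cast_binomial]
  simp [charFun_map_indicator_one P hA, hp]

theorem map_sum_indicator_Iic_pi_volume (p : I) :
    (Measure.pi fun _ : Fin m => (volume : Measure I)).map
      (fun u => ∑ i, (Set.Iic p).indicator (1 : I → ℝ) (u i)) = Bin(ℝ, m, p) :=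
  map_sum_indicator_pi volume measurableSet_Iic (by simp [Measure.real, p.2.1])

theorem measurable_sum_indicator_Iic (p : I) :
    Measurable fun u : Fin m → I => ∑ i, (Set.Iic p).indicator (1 : I → ℝ) (u i) :=
  Finset.measurable_sum _ fun i _ =>
    (measurable_one.indicator measurableSet_Iic).comp (measurable_pi_apply i)

theorem sum_indicator_Iic_mono {p q : I} (hpq : p ≤ q) (u : Fin m → I) :
    ∑ i, (Set.Iic p).indicator (1 : I → ℝ) (u i) ≤ ∑ i, (Set.Iic q).indicator (1 : I → ℝ) (u i) :=
  Finset.sum_le_sum fun i _ => Set.indicator_le_indicator_of_subset (Set.Iic_subset_Iic.2 hpq)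
    (fun _ => zero_le_one) (u i)

theorem binomial_Iio_anti {p q : I} (hpq : p ≤ q) (k : ℝ) :
    Bin(ℝ, m, q) (Set.Iio k) ≤ Bin(ℝ, m, p) (Set.Iio k) := by
  rw [← map_sum_indicator_Iic_pi_volume p, ← map_sum_indicator_Iic_pi_volume q,
    Measure.map_apply (measurable_sum_indicator_Iic p) measurableSet_Iio,
    Measure.map_apply (measurable_sum_indicator_Iic q) measurableSet_Iio]
  exact measure_mono fun u hu => (sum_indicator_Iic_mono hpq u).trans_lt hu

theorem binomial_Ioi_mono {p q : I} (hpq : p ≤ q) (k : ℝ) :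
    Bin(ℝ, m, p) (Set.Ioi k) ≤ Bin(ℝ, m, q) (Set.Ioi k) := by
  rw [← map_sum_indicator_Iic_pi_volume p, ← map_sum_indicator_Iic_pi_volume q,
    Measure.map_apply (measurable_sum_indicator_Iic p) measurableSet_Ioi,
    Measure.map_apply (measurable_sum_indicator_Iic q) measurableSet_Ioi]
  exact measure_mono fun u hu => lt_of_lt_of_le hu (sum_indicator_Iic_mono hpq u)

/-- The standard deviation of the binomial distribution with parameters `m` and `p`. -/
def binomialStd (m : ℕ) (p : I) : ℝ := √(m * (p * (1 - p)))

theorem binomialStd_sq (m : ℕ) (p : I) : binomialStd m p ^ 2 = m * (p * (1 - p)) :=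
  Real.sq_sqrt (mul_nonneg (Nat.cast_nonneg m)
    (mul_nonneg p.2.1 (sub_nonneg.2 p.2.2)))

/-- The characteristic function of a centered Bernoulli variable with parameter `p`. -/
def centeredBernoulliCharFun (p : I) (t : ℝ) : ℂ :=
  p * Complex.exp ((t * (1 - p) : ℝ) * Complex.I) +
    (1 - p) * Complex.exp ((-(t * p) : ℝ) * Complex.I)

theorem charFun_map_standardize_binomial (p : I) (s t : ℝ) :
    charFun (Bin(ℝ, m, p).map fun x => (x - m * (p : ℝ)) / s) t =
      centeredBernoulliCharFun p (t / s) ^ m := by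
  have hcomp : (fun x : ℝ => (x - m * (p : ℝ)) / s) =
      (fun x => x + -(m * (p : ℝ) / s)) ∘ (fun x => s⁻¹ * x) := by
    ext x
    simp only [Function.comp_apply]
    ring
  have hexp : Complex.exp ((inner ℝ (-(m * (p : ℝ) / s)) t : ℝ) * Complex.I) =
      Complex.exp ((-(t / s * p) : ℝ) * Complex.I) ^ m := by
    rw [← Complex.exp_nat_mul]
    congr 1
    simp only [RCLike.inner_apply, Real.ringHom_apply]
    push_cast
    ring
  rw [hcomp, ← Measure.map_map (by fun_prop) (by fun_prop), charFun_map_add_const,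
    charFun_map_mul, charFun_map_cast_binomial, hexp, ← mul_pow, add_mul,
    mul_assoc, ← Complex.exp_add, centeredBernoulliCharFun]
  congr 4
  push_cast
  ring

theorem norm_exp_mul_I_sub_le {x : ℝ} (hx : |x| ≤ 1) :
    ‖Complex.exp (x * Complex.I) - (1 + x * Complex.I - x ^ 2 / 2)‖ ≤ |x| ^ 3 := by
  have hnorm : ‖(x : ℂ) * Complex.I‖ = |x| := by simp
  have hsum : ∑ k ∈ Finset.range 3, ((x : ℂ) * Complex.I) ^ k / (k.factorial : ℂ) =
      1 + x * Complex.I - x ^ 2 / 2 := by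
    simp only [Finset.sum_range_succ, Finset.sum_range_zero, mul_pow, Complex.I_sq, Nat.factorial]
    push_cast
    ring
  have hbound := Complex.exp_bound (hnorm.trans_le hx) (n := 3) three_pos
  rw [hsum, hnorm] at hbound
  refine hbound.trans (mul_le_of_le_one_right (by positivity) ?_)
  norm_num [Nat.factorial]

theorem norm_centeredBernoulliCharFun_sub_le (p : I) {t : ℝ} (ht : |t| ≤ 1) :
    ‖centeredBernoulliCharFun p t - (1 - (p * (1 - p) * t ^ 2 / 2 : ℝ))‖ ≤
      p * (1 - p) * |t| ^ 3 := by
  obtain ⟨p, hp0, hp1⟩ := p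
  have hq0 : 0 ≤ 1 - p := sub_nonneg.2 hp1
  set a : ℝ := t * (1 - p) with ha
  set b : ℝ := -(t * p) with hb
  have habs_a : |a| = |t| * (1 - p) := by rw [ha, abs_mul, abs_of_nonneg hq0]
  have habs_b : |b| = |t| * p := by rw [hb, abs_neg, abs_mul, abs_of_nonneg hp0]
  have hexp_a := norm_exp_mul_I_sub_le (x := a)
    (habs_a.trans_le (mul_le_one₀ ht hq0 (by linarith)))
  have hexp_b := norm_exp_mul_I_sub_le (x := b) (habs_b.trans_le (mul_le_one₀ ht hp0 hp1))
  have hsplit : centeredBernoulliCharFun ⟨p, hp0, hp1⟩ t - (1 - (p * (1 - p) * t ^ 2 / 2 : ℝ)) =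
      (p : ℂ) * (Complex.exp (a * Complex.I) - (1 + a * Complex.I - a ^ 2 / 2)) +
        ((1 - p : ℝ) : ℂ) * (Complex.exp (b * Complex.I) - (1 + b * Complex.I - b ^ 2 / 2)) := by
    simp only [centeredBernoulliCharFun, ← ha, ← hb]
    rw [ha, hb]
    push_cast
    ring
  calc ‖centeredBernoulliCharFun ⟨p, hp0, hp1⟩ t - (1 - (p * (1 - p) * t ^ 2 / 2 : ℝ))‖
      ≤ p * |a| ^ 3 + (1 - p) * |b| ^ 3 := by
        rw [hsplit]
        refine (norm_add_le _ _).trans ?_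
        rw [norm_mul, norm_mul, Complex.norm_of_nonneg hp0, Complex.norm_of_nonneg hq0]
        gcongr
    _ = p * (1 - p) * |t| ^ 3 * (1 - 2 * (p * (1 - p))) := by
        rw [habs_a, habs_b]
        ring
    _ ≤ p * (1 - p) * |t| ^ 3 :=
        mul_le_of_le_one_right (by positivity) (by linarith [mul_nonneg hp0 hq0])

theorem norm_mul_centeredBernoulliCharFun_sub_one_sub_le {p : I} {t : ℝ}
    (hpos : 0 < binomialStd m p) (ht : |t| ≤ binomialStd m p) :
    ‖(m : ℂ) * (centeredBernoulliCharFun p (t / binomialStd m p) - 1) - (-(t ^ 2 / 2 : ℝ))‖ ≤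
      |t| ^ 3 / binomialStd m p := by
  set s := binomialStd m p
  have hvar : (m : ℝ) * (p * (1 - p)) = s ^ 2 := (binomialStd_sq m p).symm
  have hts : |t / s| ≤ 1 := by rwa [abs_div, abs_of_pos hpos, div_le_one hpos]
  have hsecond : (m : ℝ) * (p * (1 - p) * (t / s) ^ 2 / 2) = t ^ 2 / 2 := by
    calc (m : ℝ) * (p * (1 - p) * (t / s) ^ 2 / 2)
        = m * (p * (1 - p)) * (t / s) ^ 2 / 2 := by ring
      _ = t ^ 2 / 2 := by rw [hvar]; field_simp
  have hsplit : (m : ℂ) * (centeredBernoulliCharFun p (t / s) - 1) - (-(t ^ 2 / 2 : ℝ)) =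
      m * (centeredBernoulliCharFun p (t / s) - (1 - (p * (1 - p) * (t / s) ^ 2 / 2 : ℝ))) := by
    rw [← hsecond]
    push_cast
    ring
  calc ‖(m : ℂ) * (centeredBernoulliCharFun p (t / s) - 1) - (-(t ^ 2 / 2 : ℝ))‖
      ≤ m * (p * (1 - p) * |t / s| ^ 3) := by
        rw [hsplit, norm_mul, Complex.norm_natCast]
        gcongr
        exact norm_centeredBernoulliCharFun_sub_le p hts
    _ = s ^ 2 * |t / s| ^ 3 := by rw [← mul_assoc, hvar]
    _ = |t| ^ 3 / s := by
        rw [abs_div, abs_of_pos hpos]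
        field_simp

theorem tendsto_centeredBernoulliCharFun_pow {p : ℕ → I}
    (hs : Tendsto (fun m => binomialStd m (p m)) atTop atTop) (t : ℝ) :
    Tendsto (fun m => centeredBernoulliCharFun (p m) (t / binomialStd m (p m)) ^ m) atTop
      (𝓝 (Complex.exp (-(t ^ 2 / 2 : ℝ)))) := by
  have hlog : Tendsto (fun m : ℕ =>
      (m : ℂ) * (centeredBernoulliCharFun (p m) (t / binomialStd m (p m)) - 1)) atTop
      (𝓝 (-(t ^ 2 / 2 : ℝ))) := by
    rw [tendsto_iff_norm_sub_tendsto_zero]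
    refine squeeze_zero' (Eventually.of_forall fun _ => norm_nonneg _) ?_
      (tendsto_const_nhds (x := |t| ^ 3).div_atTop hs)
    filter_upwards [hs.eventually_gt_atTop 0, hs.eventually_ge_atTop |t|] with m hpos ht
      using norm_mul_centeredBernoulliCharFun_sub_one_sub_le hpos ht
  simpa only [add_sub_cancel] using Complex.tendsto_one_add_pow_exp_of_tendsto hlog

theorem tendsto_binomial_standardized {p : ℕ → I}
    (hs : Tendsto (fun m => binomialStd m (p m)) atTop atTop) {T : Set ℝ} (hT : MeasurableSet T)
    (hfr : gaussianReal 0 1 (frontier T) = 0) :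
    Tendsto (fun m => Bin(ℝ, m, p m) {x | (x - m * (p m : ℝ)) / binomialStd m (p m) ∈ T})
      atTop (𝓝 (gaussianReal 0 1 T)) := by
  have hmeas (m : ℕ) : Measurable fun x : ℝ => (x - m * (p m : ℝ)) / binomialStd m (p m) := by
    fun_prop
  let Z (m : ℕ) : ProbabilityMeasure ℝ :=
    ⟨Bin(ℝ, m, p m).map fun x => (x - m * (p m : ℝ)) / binomialStd m (p m),
      Measure.isProbabilityMeasure_map (hmeas m).aemeasurable⟩
  let N : ProbabilityMeasure ℝ := ⟨gaussianReal 0 1, inferInstance⟩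
  have hconv : Tendsto Z atTop (𝓝 N) := by
    refine ProbabilityMeasure.tendsto_iff_tendsto_charFun.2 fun t => ?_
    have hN : charFun (N : Measure ℝ) t = Complex.exp (-(t ^ 2 / 2 : ℝ)) := by
      simp [N, charFun_gaussianReal]
    rw [hN]
    exact (tendsto_centeredBernoulliCharFun_pow hs t).congr fun m =>
      (charFun_map_standardize_binomial (p m) _ t).symm
  refine (ProbabilityMeasure.tendsto_measure_of_null_frontier_of_tendsto' hconv hfr).congr
    fun m => ?_
  exact Measure.map_apply (hmeas m) hT

theorem eventually_binomial_Iio_lt {p : ℕ → I}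
    (hs : Tendsto (fun m => binomialStd m (p m)) atTop atTop) {η G : ℝ} (hG : gaussTail η < G)
    {k : ℕ → ℝ} (hk : ∀ᶠ m in atTop, η * binomialStd m (p m) ≤ m * p m - k m) :
    ∀ᶠ m in atTop, Bin(ℝ, m, p m) (Set.Iio (k m)) < ENNReal.ofReal G := by
  have htail : gaussianReal 0 1 (Set.Iic (-η)) < ENNReal.ofReal G := by
    rw [gaussianReal_zero_one_Iic_neg]
    exact (ENNReal.lt_ofReal_iff_toReal_lt (measure_ne_top _ _)).2 hG
  have := nullSingletonClass_gaussianReal (μ := 0) (v := 1) one_ne_zero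
  have hclt := tendsto_binomial_standardized hs (measurableSet_Iic (a := -η))
    (by rw [frontier_Iic]; exact measure_singleton _)
  filter_upwards [hclt.eventually_lt_const htail, hk, hs.eventually_gt_atTop 0]
    with m hm hkm hpos
  refine (measure_mono fun x (hx : x < k m) => ?_).trans_lt hm
  rw [Set.mem_ofPred_eq, Set.mem_Iic, div_le_iff₀ hpos]
  linarith

theorem eventually_binomial_Ioi_lt {p : ℕ → I}
    (hs : Tendsto (fun m => binomialStd m (p m)) atTop atTop) {η G : ℝ} (hG : gaussTail η < G)
    {k : ℕ → ℝ} (hk : ∀ᶠ m in atTop, η * binomialStd m (p m) ≤ k m - m * p m) :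
    ∀ᶠ m in atTop, Bin(ℝ, m, p m) (Set.Ioi (k m)) < ENNReal.ofReal G := by
  have htail : gaussianReal 0 1 (Set.Ici η) < ENNReal.ofReal G :=
    (ENNReal.lt_ofReal_iff_toReal_lt (measure_ne_top _ _)).2 hG
  have := nullSingletonClass_gaussianReal (μ := 0) (v := 1) one_ne_zero
  have hclt := tendsto_binomial_standardized hs (measurableSet_Ici (a := η))
    (by rw [frontier_Ici]; exact measure_singleton _)
  filter_upwards [hclt.eventually_lt_const htail, hk, hs.eventually_gt_atTop 0]
    with m hm hkm hpos
  refine (measure_mono fun x (hx : k m < x) => ?_).trans_lt hm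
  rw [Set.mem_ofPred_eq, Set.mem_Ici, le_div_iff₀ hpos]
  linarith

end Binomial

section Projection

theorem integral_exp_mul_I_gaussianReal (c : ℝ) :
    ∫ a, Complex.exp ((a * c : ℝ) * Complex.I) ∂(gaussianReal 0 1) =
      Complex.exp (-(c ^ 2 / 2 : ℝ)) := by
  have hchar := charFun_gaussianReal (μ := 0) (v := 1) c
  rw [charFun_apply_real] at hchar
  simpa [mul_comm] using hchar

theorem integral_exp_sum_mul_I_pi_gaussianReal {ι : Type*} [Fintype ι] (c : ι → ℝ) :
    ∫ a, Complex.exp ((∑ j, a j * c j : ℝ) * Complex.I)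
      ∂(Measure.pi fun _ : ι => gaussianReal 0 1) = Complex.exp (-((∑ j, c j ^ 2) / 2 : ℝ)) := by
  simp_rw [Complex.ofReal_sum, Finset.sum_mul, Complex.exp_sum]
  rw [integral_fintype_prod_eq_prod (𝕜 := ℂ)
    (fun j (a : ℝ) => Complex.exp ((a * c j : ℝ) * Complex.I))]
  simp_rw [integral_exp_mul_I_gaussianReal]
  rw [← Complex.exp_sum, Finset.sum_neg_distrib, ← Complex.ofReal_sum, Finset.sum_div]

theorem apply_eq_add_mul (L : StrongDual ℝ (ℝ × ℝ)) (p : ℝ × ℝ) :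
    L p = L (1, 0) * p.1 + L (0, 1) * p.2 := by
  have hp : p = p.1 • ((1 : ℝ), (0 : ℝ)) + p.2 • ((0 : ℝ), (1 : ℝ)) := by ext <;> simp
  conv_lhs => rw [hp, map_add, map_smul, map_smul, smul_eq_mul, smul_eq_mul]
  ring

theorem charFunDual_gaussPair {lam : ℝ} (hlam : lam ^ 2 ≤ 1) (L : StrongDual ℝ (ℝ × ℝ)) :
    charFunDual (gaussPair lam) L = Complex.exp
      (-((L (1, 0) ^ 2 + 2 * lam * L (1, 0) * L (0, 1) + L (0, 1) ^ 2) / 2 : ℝ)) := by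
  set s := L (1, 0)
  set t := L (0, 1)
  have hexp (z : ℝ × ℝ) :
      Complex.exp (L (z.1, lam * z.1 + √(1 - lam ^ 2) * z.2) * Complex.I) =
        Complex.exp ((z.1 * (s + t * lam) : ℝ) * Complex.I) *
          Complex.exp ((z.2 * (t * √(1 - lam ^ 2)) : ℝ) * Complex.I) := by
    rw [apply_eq_add_mul L, ← Complex.exp_add]
    congr 1
    push_cast
    ring
  rw [charFunDual_apply, gaussPair, integral_map (by fun_prop) (by fun_prop)]
  simp_rw [hexp]
  rw [integral_prod_mul (fun a : ℝ => Complex.exp ((a * (s + t * lam) : ℝ) * Complex.I))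
    (fun a : ℝ => Complex.exp ((a * (t * √(1 - lam ^ 2)) : ℝ) * Complex.I)),
    integral_exp_mul_I_gaussianReal, integral_exp_mul_I_gaussianReal, ← Complex.exp_add,
    mul_pow t, Real.sq_sqrt (sub_nonneg.2 hlam)]
  congr 1
  push_cast
  ring

variable {d : ℕ}

theorem measurable_dotp (x : Fin d → ℝ) : Measurable fun a => dotp a x := by
  unfold dotp; fun_prop

theorem measurable_dotp_prodMk (x y : Fin d → ℝ) : Measurable fun a => (dotp a x, dotp a y) :=
  (measurable_dotp x).prodMk (measurable_dotp y)

theorem charFunDual_map_dotp_prodMk (x y : Fin d → ℝ) (L : StrongDual ℝ (ℝ × ℝ)) :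
    charFunDual ((Measure.pi fun _ : Fin d => gaussianReal 0 1).map
      fun a => (dotp a x, dotp a y)) L =
        Complex.exp (-((∑ j, (L (1, 0) * x j + L (0, 1) * y j) ^ 2) / 2 : ℝ)) := by
  have hL (a : Fin d → ℝ) :
      L (dotp a x, dotp a y) = ∑ j, a j * (L (1, 0) * x j + L (0, 1) * y j) := by
    rw [apply_eq_add_mul L, dotp, dotp, Finset.mul_sum, Finset.mul_sum, ← Finset.sum_add_distrib]
    exact Finset.sum_congr rfl fun j _ => by ring
  rw [charFunDual_apply, integral_map (measurable_dotp_prodMk x y).aemeasurable (by fun_prop)]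
  simp_rw [hL, integral_exp_sum_mul_I_pi_gaussianReal]

theorem dotp_sq_le_one {x y : Fin d → ℝ} (hx : unitVec x) (hy : unitVec y) :
    dotp x y ^ 2 ≤ 1 := by
  simpa [dotp, show ∑ j, x j ^ 2 = 1 from hx, show ∑ j, y j ^ 2 = 1 from hy] using
    Finset.sum_mul_sq_le_sq_mul_sq Finset.univ x y

theorem dotp_mem_Icc {x y : Fin d → ℝ} (hx : unitVec x) (hy : unitVec y) :
    dotp x y ∈ Set.Icc (-1) 1 :=
  abs_le.1 ((sq_le_one_iff_abs_le_one _).1 (dotp_sq_le_one hx hy))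

theorem map_dotp_prodMk_eq_gaussPair {x y : Fin d → ℝ} (hx : unitVec x) (hy : unitVec y) :
    (Measure.pi fun _ : Fin d => gaussianReal 0 1).map (fun a => (dotp a x, dotp a y)) =
      gaussPair (dotp x y) := by
  have := Measure.isProbabilityMeasure_map
    (μ := Measure.pi fun _ : Fin d => gaussianReal 0 1) (measurable_dotp_prodMk x y).aemeasurable
  have : IsProbabilityMeasure (gaussPair (dotp x y)) :=
    Measure.isProbabilityMeasure_map (by fun_prop)
  refine Measure.ext_of_charFunDual ?_
  ext L
  have hsum : ∑ j, (L (1, 0) * x j + L (0, 1) * y j) ^ 2 =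
      L (1, 0) ^ 2 + 2 * dotp x y * L (1, 0) * L (0, 1) + L (0, 1) ^ 2 := by
    calc ∑ j, (L (1, 0) * x j + L (0, 1) * y j) ^ 2
        = L (1, 0) ^ 2 * ∑ j, x j ^ 2 + 2 * dotp x y * L (1, 0) * L (0, 1) +
            L (0, 1) ^ 2 * ∑ j, y j ^ 2 := by
          simp only [dotp, Finset.mul_sum, Finset.sum_mul, ← Finset.sum_add_distrib]
          exact Finset.sum_congr rfl fun j _ => by ring
      _ = L (1, 0) ^ 2 + 2 * dotp x y * L (1, 0) * L (0, 1) + L (0, 1) ^ 2 := by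
          rw [show ∑ j, x j ^ 2 = 1 from hx, show ∑ j, y j ^ 2 = 1 from hy, mul_one, mul_one]
  rw [charFunDual_map_dotp_prodMk, charFunDual_gaussPair (dotp_sq_le_one hx hy), hsum]

theorem measureReal_setOf_le_dotp {x y : Fin d → ℝ} (hx : unitVec x) (hy : unitVec y) (h : ℝ) :
    (Measure.pi fun _ : Fin d => gaussianReal 0 1).real {a | h ≤ dotp a x ∧ h ≤ dotp a y} =
      mu (dotp x y) h := by
  rw [mu, ← map_dotp_prodMk_eq_gaussPair hx hy,
    Measure.map_apply (measurable_dotp_prodMk x y) (measurableSet_quadrant h)]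
  rfl

theorem mul_score_eq_sum_indicator (m : ℕ) (r : ℝ) (x y : Fin d → ℝ) (ω : Fin m → Fin d → ℝ) :
    m * score d m r x y ω =
      ∑ i, {a : Fin d → ℝ | hthr r m ≤ dotp a x ∧ hthr r m ≤ dotp a y}.indicator 1 (ω i) := by
  rcases eq_or_ne m 0 with rfl | hm
  · simp
  rw [score, ← mul_assoc, mul_one_div_cancel (Nat.cast_ne_zero.2 hm), one_mul]
  refine Finset.sum_congr rfl fun i _ => ?_
  simp only [Set.indicator_apply, Set.mem_ofPred_eq, Pi.one_apply, mul_ite, mul_one, mul_zero,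
    ite_and]
  split_ifs <;> rfl

theorem measurable_score (m : ℕ) (r : ℝ) (x y : Fin d → ℝ) : Measurable (score d m r x y) := by
  have hind (z : Fin d → ℝ) (i : Fin m) :
      Measurable fun ω : Fin m → Fin d → ℝ => if hthr r m ≤ dotp (ω i) z then (1 : ℝ) else 0 :=
    Measurable.ite (measurableSet_le measurable_const
      ((measurable_dotp z).comp (measurable_pi_apply i))) measurable_const measurable_const
  exact (Finset.measurable_sum _ fun i _ => (hind x i).mul (hind y i)).const_mul _

theorem map_mul_score_eq_binomial (m : ℕ) (r : ℝ) {x y : Fin d → ℝ} (hx : unitVec x)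
    (hy : unitVec y) {p : I} (hp : muM r m (dotp x y) = p) :
    (Prob d m).map (fun ω => m * score d m r x y ω) = Bin(ℝ, m, p) := by
  simp_rw [mul_score_eq_sum_indicator]
  exact map_sum_indicator_pi _ (measurable_dotp_prodMk x y (measurableSet_quadrant (hthr r m)))
    ((measureReal_setOf_le_dotp hx hy _).trans hp)

end Projection

section Asymptotics

theorem exists_abs_mu_sub_eq {a b : ℝ} (ha : a ∈ Set.Ioo (-1) 1) (hb : b ∈ Set.Ioo (-1) 1)
    (h : ℝ) :
    ∃ t, |t - a| ≤ |b - a| ∧ |mu b h - mu a h| = |b - a| * plackettDensity h t := by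
  rcases lt_trichotomy a b with hab | rfl | hab
  · obtain ⟨t, ht, heq⟩ := exists_mu_sub_eq ha.1 hab hb.2 h
    refine ⟨t, ?_, ?_⟩
    · rw [abs_of_pos (sub_pos.2 ht.1), abs_of_pos (sub_pos.2 hab)]
      exact sub_le_sub_right ht.2.le a
    · rw [heq, abs_mul, abs_of_pos (plackettDensity_pos ⟨ha.1.trans ht.1, ht.2.trans hb.2⟩)]
  · exact ⟨a, le_rfl, by simp⟩
  · obtain ⟨t, ht, heq⟩ := exists_mu_sub_eq hb.1 hab ha.2 h
    refine ⟨t, ?_, ?_⟩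
    · rw [abs_of_neg (sub_neg.2 ht.2), abs_of_neg (sub_neg.2 hab)]
      exact neg_le_neg (sub_le_sub_right ht.1.le a)
    · rw [abs_sub_comm, heq, abs_mul, abs_sub_comm a,
        abs_of_pos (plackettDensity_pos ⟨hb.1.trans ht.1, ht.2.trans ha.2⟩)]

theorem tendsto_plackettDensity_div {ι : Type*} {l : Filter ι} {lam : ℝ}
    (hlam : lam ∈ Set.Ioo (-1) 1) {h t : ι → ℝ} (ht : Tendsto t l (𝓝 lam))
    (hht : Tendsto (fun i => h i ^ 2 * (t i - lam)) l (𝓝 0)) :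
    Tendsto (fun i => plackettDensity (h i) (t i) / plackettDensity (h i) lam) l (𝓝 1) := by
  have hc : 0 < 1 - lam ^ 2 := one_sub_sq_pos hlam
  have hlam1 : 0 < 1 + lam := by linarith [hlam.1]
  have hexp : Tendsto (fun i => Real.exp (h i ^ 2 * (t i - lam) / ((1 + lam) * (1 + t i)))) l
      (𝓝 1) := by
    simpa only [zero_div, Real.exp_zero, Pi.div_apply] using
      (hht.div ((ht.const_add 1).const_mul (1 + lam)) (mul_pos hlam1 hlam1).ne').rexp
  have hsqrt : Tendsto (fun i => √(1 - lam ^ 2) / √(1 - t i ^ 2)) l (𝓝 1) := by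
    have hpos : √(1 - lam ^ 2) ≠ 0 := (Real.sqrt_pos.2 hc).ne'
    have := (tendsto_const_nhds (x := √(1 - lam ^ 2))).div ((ht.pow 2).const_sub 1).sqrt hpos
    rwa [div_self hpos] at this
  rw [← one_mul (1 : ℝ)]
  refine (hexp.mul hsqrt).congr' ?_
  filter_upwards [ht.eventually (isOpen_Ioo.mem_nhds hlam)] with i hi
  have hi1 : 0 < 1 + t i := by linarith [hi.1]
  have hci : 0 < 1 - t i ^ 2 := one_sub_sq_pos hi
  have hsplit : Real.exp (-(h i ^ 2) / (1 + t i)) = Real.exp (-(h i ^ 2) / (1 + lam)) *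
      Real.exp (h i ^ 2 * (t i - lam) / ((1 + lam) * (1 + t i))) := by
    rw [← Real.exp_add]
    congr 1
    field_simp
    ring
  rw [plackettDensity, plackettDensity, hsplit]
  field_simp

variable {r : ℝ}

theorem hthr_sq (hr : 0 ≤ r) (m : ℕ) : hthr r m ^ 2 = 2 * r * Real.log m :=
  Real.sq_sqrt (mul_nonneg (by positivity) (Real.log_natCast_nonneg m))

theorem hthr_pos (hr : 0 < r) {m : ℕ} (hm : 2 ≤ m) : 0 < hthr r m :=
  Real.sqrt_pos.2 (mul_pos (by positivity) (Real.log_pos (Nat.one_lt_cast.2 hm)))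

theorem tendsto_hthr_atTop (hr : 0 < r) : Tendsto (hthr r) atTop atTop :=
  Real.tendsto_sqrt_atTop.comp
    ((Real.tendsto_log_atTop.comp tendsto_natCast_atTop_atTop).const_mul_atTop (by positivity))

theorem mul_exp_neg_hthr_sq_div (hr : 0 ≤ r) {m : ℕ} (hm : m ≠ 0) {a : ℝ} (ha : -1 < a) :
    m * Real.exp (-(hthr r m ^ 2) / (1 + a)) = (m : ℝ) ^ ((a - (2 * r - 1)) / (1 + a)) := by
  have hm0 : (0 : ℝ) < m := Nat.cast_pos.2 hm.pos
  have ha1 : 0 < 1 + a := by linarith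
  rw [hthr_sq hr, Real.rpow_def_of_pos hm0]
  nth_rw 1 [← Real.exp_log hm0]
  rw [← Real.exp_add]
  congr 1
  field_simp
  ring

variable {lam : ℝ}

theorem sqrt_mul_plackettDensity_hthr (hr : 0 ≤ r) {m : ℕ} (hm : m ≠ 0)
    (hlam : lam ∈ Set.Ioo (-1) 1) :
    √(m * plackettDensity (hthr r m) lam) =
      (m : ℝ) ^ ((lam - (2 * r - 1)) / (2 * (1 + lam))) /
        (√(2 * π) * (1 - lam ^ 2) ^ ((1 : ℝ) / 4)) := by
  have hc : 0 < 1 - lam ^ 2 := one_sub_sq_pos hlam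
  have hpow : (m : ℝ) ^ ((lam - (2 * r - 1)) / (1 + lam)) =
      ((m : ℝ) ^ ((lam - (2 * r - 1)) / (2 * (1 + lam)))) ^ 2 := by
    rw [← Real.rpow_mul_natCast (Nat.cast_nonneg m)]
    congr 1
    have : 1 + lam ≠ 0 := by linarith [hlam.1]
    field_simp
    push_cast
    ring
  have hroot : √(1 - lam ^ 2) = ((1 - lam ^ 2) ^ ((1 : ℝ) / 4)) ^ 2 := by
    rw [← Real.rpow_mul_natCast hc.le, Real.sqrt_eq_rpow]
    norm_num
  rw [plackettDensity, ← mul_div_assoc, mul_exp_neg_hthr_sq_div hr hm hlam.1, hpow, hroot,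
    Real.sqrt_div (sq_nonneg _), Real.sqrt_mul (by positivity), Real.sqrt_sq (by positivity),
    Real.sqrt_sq (by positivity)]

theorem epsm_pos {eta : ℝ} (hr : 0 < r) (hlam : lam ∈ Set.Ioo (-1) 1) (heta : 0 < eta) {m : ℕ}
    (hm : 2 ≤ m) : 0 < epsm r lam eta m := by
  have hh : 0 < √(2 * r * Real.log m) := hthr_pos hr hm
  have hlam1 : 0 < 1 + lam := by linarith [hlam.1]
  have hc : 0 < 1 - lam ^ 2 := one_sub_sq_pos hlam
  have : 0 < m := by lia
  unfold epsm
  positivity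

theorem hthr_mul_epsm (hr : 0 < r) (eta : ℝ) {m : ℕ} (hm : 2 ≤ m) :
    hthr r m * epsm r lam eta m = √(2 * π) * (1 + lam) * (1 - lam ^ 2) ^ ((1 : ℝ) / 4) * eta *
      (m : ℝ) ^ (-(lam - (2 * r - 1)) / (2 * (1 + lam))) := by
  have hh : hthr r m ≠ 0 := (hthr_pos hr hm).ne'
  rw [epsm, ← hthr, ← mul_assoc, mul_div_cancel₀ _ hh]

-- The constant in `epsm` is chosen to make this identity exact.
theorem sqrt_mul_plackettDensity_mul_hthr_mul_epsm (hr : 0 < r) (hlam : lam ∈ Set.Ioo (-1) 1)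
    (eta : ℝ) {m : ℕ} (hm : 2 ≤ m) :
    √(m * plackettDensity (hthr r m) lam) * (hthr r m * epsm r lam eta m) = (1 + lam) * eta := by
  have hc : 0 < (1 - lam ^ 2) ^ ((1 : ℝ) / 4) := Real.rpow_pos_of_pos (one_sub_sq_pos hlam) _
  have hm0 : (0 : ℝ) < m := by positivity
  rw [hthr_mul_epsm hr eta hm, sqrt_mul_plackettDensity_hthr hr.le (by lia) hlam, neg_div,
    Real.rpow_neg hm0.le]
  field_simp

theorem tendsto_hthr_mul_rpow_neg (r : ℝ) {c : ℝ} (hc : 0 < c) :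
    Tendsto (fun m : ℕ => hthr r m * (m : ℝ) ^ (-c)) atTop (𝓝 0) := by
  have hlog : Tendsto (fun m : ℕ => Real.log m / (m : ℝ) ^ (c * 2)) atTop (𝓝 0) :=
    (isLittleO_log_rpow_atTop (by positivity)).tendsto_div_nhds_zero.comp
      tendsto_natCast_atTop_atTop
  have hsqrt : Tendsto (fun m : ℕ => √(2 * r * (Real.log m / (m : ℝ) ^ (c * 2)))) atTop (𝓝 0) := by
    simpa using (hlog.const_mul (2 * r)).sqrt
  refine hsqrt.congr fun m => ?_
  rw [← mul_div_assoc, Real.sqrt_div' _ (by positivity), Real.rpow_mul (Nat.cast_nonneg m),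
    Real.rpow_two, Real.sqrt_sq (by positivity), Real.rpow_neg (Nat.cast_nonneg m), hthr,
    div_eq_mul_inv]

theorem tendsto_hthr_sq_mul_epsm (hr : 0 < r) (hlam : lam ∈ Set.Ioo (2 * r - 1) 1) (eta : ℝ) :
    Tendsto (fun m => hthr r m ^ 2 * epsm r lam eta m) atTop (𝓝 0) := by
  have hc : 0 < (lam - (2 * r - 1)) / (2 * (1 + lam)) :=
    div_pos (by linarith [hlam.1]) (by linarith [hlam.1])
  rw [← mul_zero (√(2 * π) * (1 + lam) * (1 - lam ^ 2) ^ ((1 : ℝ) / 4) * eta)]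
  refine ((tendsto_hthr_mul_rpow_neg r hc).const_mul _).congr' ?_
  filter_upwards [eventually_ge_atTop 2] with m hm
  rw [sq (hthr r m), mul_assoc (hthr r m), hthr_mul_epsm hr eta hm, neg_div]
  ring

theorem tendsto_of_tendsto_hthr_sq_mul_sub (hr : 0 < r) {t : ℕ → ℝ}
    (ht : Tendsto (fun m => hthr r m ^ 2 * (t m - lam)) atTop (𝓝 0)) :
    Tendsto t atTop (𝓝 lam) := by
  have hinv : Tendsto (fun m => (hthr r m ^ 2)⁻¹) atTop (𝓝 0) :=
    ((tendsto_pow_atTop two_ne_zero).comp (tendsto_hthr_atTop hr)).inv_tendsto_atTop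
  have hsub : Tendsto (fun m => t m - lam) atTop (𝓝 0) := by
    rw [← mul_zero (0 : ℝ)]
    refine (hinv.mul ht).congr' ?_
    filter_upwards [eventually_ge_atTop 2] with m hm
    exact inv_mul_cancel_left₀ (pow_ne_zero 2 (hthr_pos hr hm).ne') _
  exact tendsto_sub_nhds_zero_iff.1 hsub

theorem tendsto_hthr_sq_mul_sub (hr : 0 < r) (hlam : lam ∈ Set.Ioo (2 * r - 1) 1) {eta : ℝ}
    {t : ℕ → ℝ} (ht : ∀ᶠ m in atTop, |t m - lam| ≤ epsm r lam eta m) :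
    Tendsto (fun m => hthr r m ^ 2 * (t m - lam)) atTop (𝓝 0) := by
  refine squeeze_zero_norm' ?_ (tendsto_hthr_sq_mul_epsm hr hlam eta)
  filter_upwards [ht] with m hm
  rw [norm_mul, Real.norm_of_nonneg (sq_nonneg _)]
  exact mul_le_mul_of_nonneg_left hm (sq_nonneg _)

theorem tendsto_of_abs_sub_le_epsm (hr : 0 < r) (hlam : lam ∈ Set.Ioo (2 * r - 1) 1) {eta : ℝ}
    {t : ℕ → ℝ} (ht : ∀ᶠ m in atTop, |t m - lam| ≤ epsm r lam eta m) :
    Tendsto t atTop (𝓝 lam) :=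
  tendsto_of_tendsto_hthr_sq_mul_sub hr (tendsto_hthr_sq_mul_sub hr hlam ht)

theorem tendsto_mul_mu_hthr_atTop (hr : 0 < r) {b : ℝ} (hb : b ∈ Set.Ioo (2 * r - 1) 1) :
    Tendsto (fun m : ℕ => m * mu b (hthr r m)) atTop atTop := by
  obtain ⟨a, ha, hab⟩ := exists_between hb.1
  have ha1 : -1 < a := by linarith
  have hexponent : 0 < (a - (2 * r - 1)) / (1 + a) := div_pos (by linarith) (by linarith)
  have hconst : 0 < (b - a) / (2 * π) := div_pos (sub_pos.2 hab) (by positivity)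
  refine tendsto_atTop_mono' _ ?_ (((tendsto_rpow_atTop hexponent).comp
    tendsto_natCast_atTop_atTop).const_mul_atTop hconst)
  filter_upwards [eventually_ne_atTop 0] with m hm
  calc (b - a) / (2 * π) * (m : ℝ) ^ ((a - (2 * r - 1)) / (1 + a))
      = m * ((b - a) * (Real.exp (-(hthr r m ^ 2) / (1 + a)) / (2 * π))) := by
        rw [← mul_exp_neg_hthr_sq_div hr.le hm ha1]
        ring
    _ ≤ m * mu b (hthr r m) := by
        gcongr
        exact mul_exp_le_mu ha1 hab hb.2 _

/-- `mu lam h` as a point of the unit interval, the form in which it serves as the success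
probability of a binomial distribution. -/
def muI (lam h : ℝ) : I := ⟨mu lam h, mu_mem_unitInterval lam h⟩

theorem tendsto_binomialStd_muI_atTop (hr : 0 < r) (hlam : lam ∈ Set.Ioo (2 * r - 1) 1)
    {t : ℕ → ℝ} (ht : Tendsto t atTop (𝓝 lam)) :
    Tendsto (fun m => binomialStd m (muI (t m) (hthr r m))) atTop atTop := by
  obtain ⟨b, hb, hblam⟩ := exists_between hlam.1
  have htail : ∀ᶠ m in atTop, gaussTail (hthr r m) ≤ 1 / 2 :=
    (tendsto_gaussTail_atTop.comp (tendsto_hthr_atTop hr)).eventually_le_const one_half_pos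
  refine Real.tendsto_sqrt_atTop.comp (tendsto_atTop_mono' _ ?_
    ((tendsto_mul_mu_hthr_atTop hr ⟨hb, hblam.trans hlam.2⟩).atTop_mul_const one_half_pos))
  filter_upwards [ht.eventually (Ioo_mem_nhds hblam hlam.2), htail, eventually_ge_atTop 2]
    with m hm htm hm2
  have hmono : mu b (hthr r m) ≤ mu (t m) (hthr r m) :=
    monotoneOn_mu (hthr_pos hr hm2) ⟨by linarith, by linarith [hm.1, hm.2]⟩
      ⟨by linarith [hm.1], hm.2.le⟩ hm.1.le
  have hhalf : 1 / 2 ≤ 1 - mu (t m) (hthr r m) := by linarith [mu_le_gaussTail (t m) (hthr r m)]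
  calc m * mu b (hthr r m) * (1 / 2)
      ≤ m * mu (t m) (hthr r m) * (1 - mu (t m) (hthr r m)) := by
        gcongr
        exact mul_nonneg (Nat.cast_nonneg m) (mu_nonneg _ _)
    _ = m * (mu (t m) (hthr r m) * (1 - mu (t m) (hthr r m))) := mul_assoc _ _ _

theorem mul_binomialStd_muI_le (m : ℕ) {t h : ℝ} (ht : t ∈ Set.Ioo (-1) 1) (hh : 0 < h) :
    h * binomialStd m (muI t h) ≤ (1 + t) * √(m * plackettDensity h t) := by
  have ht1 : 0 < 1 + t := by linarith [ht.1]
  have hdens : 0 < plackettDensity h t := plackettDensity_pos ht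
  refine (pow_le_pow_iff_left₀ (mul_nonneg hh.le (Real.sqrt_nonneg _)) (by positivity)
    two_ne_zero).1 ?_
  have hmu : h ^ 2 * mu t h ≤ (1 + t) ^ 2 * plackettDensity h t := by
    have := mu_le_plackettDensity ht hh
    rwa [div_mul_eq_mul_div, le_div_iff₀' (by positivity)] at this
  calc (h * binomialStd m (muI t h)) ^ 2 = m * (h ^ 2 * mu t h * (1 - mu t h)) := by
        rw [mul_pow, binomialStd_sq, muI]
        ring
    _ ≤ m * ((1 + t) ^ 2 * plackettDensity h t) := by
        refine mul_le_mul_of_nonneg_left ((mul_le_of_le_one_right ?_ ?_).trans hmu)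
          (Nat.cast_nonneg m)
        · exact mul_nonneg (sq_nonneg h) (mu_nonneg t h)
        · linarith [mu_nonneg t h]
    _ = ((1 + t) * √(m * plackettDensity h t)) ^ 2 := by
        rw [mul_pow, Real.sq_sqrt (by positivity)]
        ring

theorem mul_binomialStd_muI_le_mul_epsm {eta eta' t x : ℝ} {m : ℕ} (hr : 0 < r) (hm : 2 ≤ m)
    (hlam : lam ∈ Set.Ioo (-1) 1) (ht : t ∈ Set.Ioo (-1) 1) (heta' : 0 ≤ eta')
    (hratio : eta' * ((1 + t) *
        √(plackettDensity (hthr r m) t / plackettDensity (hthr r m) lam)) ≤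
      (1 + lam) * eta * (plackettDensity (hthr r m) x / plackettDensity (hthr r m) lam)) :
    eta' * binomialStd m (muI t (hthr r m)) ≤
      m * (epsm r lam eta m * plackettDensity (hthr r m) x) := by
  have hdens : 0 < plackettDensity (hthr r m) lam := plackettDensity_pos hlam
  have hh : 0 < hthr r m := hthr_pos hr hm
  have hroot := sqrt_mul_plackettDensity_mul_hthr_mul_epsm hr hlam eta hm
  set D := plackettDensity (hthr r m)
  refine le_of_mul_le_mul_left ?_ hh
  calc hthr r m * (eta' * binomialStd m (muI t (hthr r m)))
      = eta' * (hthr r m * binomialStd m (muI t (hthr r m))) := mul_left_comm _ _ _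
    _ ≤ eta' * ((1 + t) * √(m * D t)) :=
        mul_le_mul_of_nonneg_left (mul_binomialStd_muI_le m ht hh) heta'
    _ = √(m * D lam) * (eta' * ((1 + t) * √(D t / D lam))) := by
        have hsplit : m * D t = m * D lam * (D t / D lam) := by field_simp
        rw [hsplit, Real.sqrt_mul (by positivity)]
        ring
    _ ≤ √(m * D lam) * ((1 + lam) * eta * (D x / D lam)) :=
        mul_le_mul_of_nonneg_left hratio (Real.sqrt_nonneg _)
    _ = √(m * D lam) ^ 2 * (hthr r m * epsm r lam eta m) * (D x / D lam) := by
        rw [← hroot]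
        ring
    _ = hthr r m * (m * (epsm r lam eta m * D x)) := by
        rw [Real.sq_sqrt (by positivity)]
        field_simp

theorem eventually_mul_binomialStd_muI_le {eta eta' : ℝ} (hr : 0 < r)
    (hlam : lam ∈ Set.Ioo (2 * r - 1) 1) (heta' : 0 ≤ eta') (hlt : eta' < eta) {t : ℕ → ℝ}
    (ht : ∀ᶠ m in atTop, |t m - lam| = epsm r lam eta m) :
    ∀ᶠ m in atTop, eta' * binomialStd m (muI (t m) (hthr r m)) ≤
      m * |mu (t m) (hthr r m) - mu lam (hthr r m)| := by
  have hlam' : lam ∈ Set.Ioo (-1) 1 := ⟨by linarith [hlam.1], hlam.2⟩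
  have hlim := tendsto_of_abs_sub_le_epsm hr hlam (ht.mono fun _ => Eq.le)
  have hmem : ∀ᶠ m in atTop, t m ∈ Set.Ioo (-1) 1 := hlim.eventually (isOpen_Ioo.mem_nhds hlam')
  have hmean : ∀ᶠ m in atTop, ∃ x, |x - lam| ≤ epsm r lam eta m ∧
      |mu (t m) (hthr r m) - mu lam (hthr r m)| =
        epsm r lam eta m * plackettDensity (hthr r m) x := by
    filter_upwards [ht, hmem] with m htm hm
    simpa only [htm] using exists_abs_mu_sub_eq hlam' hm _
  obtain ⟨x, hx⟩ := hmean.choice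
  have hx_le := hx.mono fun _ => And.left
  have hleft := ((hlim.const_add 1).mul
    (tendsto_plackettDensity_div hlam' hlim
      (tendsto_hthr_sq_mul_sub hr hlam (ht.mono fun _ => Eq.le))).sqrt).const_mul eta'
  have hright := (tendsto_plackettDensity_div hlam'
    (tendsto_of_abs_sub_le_epsm hr hlam hx_le)
    (tendsto_hthr_sq_mul_sub hr hlam hx_le)).const_mul ((1 + lam) * eta)
  have hlim_lt : eta' * ((1 + lam) * √1) < (1 + lam) * eta * 1 := by
    rw [Real.sqrt_one, mul_one, mul_one, mul_comm]
    exact mul_lt_mul_of_pos_left hlt (by linarith [hlam'.1])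
  filter_upwards [hleft.eventually_lt hright hlim_lt, hmem, hx, eventually_ge_atTop 2]
    with m hratio hm hxm hm2
  rw [hxm.2]
  exact mul_binomialStd_muI_le_mul_epsm hr hm2 hlam' hm heta' hratio.le

end Asymptotics

section GoodEvent

variable {d m : ℕ} {r lam eta : ℝ}

theorem eventually_binomial_muI_add_epsm_Iio_lt (hr : 0 < r) (hlam : lam ∈ Set.Ioo (2 * r - 1) 1)
    (heta : 0 < eta) {G : ℝ} (hG : gaussTail eta < G) :
    ∀ᶠ m : ℕ in atTop, Bin(ℝ, m, muI (lam + epsm r lam eta m) (hthr r m))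
      (Set.Iio (m * muM r m lam)) < ENNReal.ofReal G := by
  obtain ⟨eta', heta', hlt, hG'⟩ := exists_lt_gaussTail_lt heta hG
  have hlam' : lam ∈ Set.Ioo (-1) 1 := ⟨by linarith [hlam.1], hlam.2⟩
  have hpos : ∀ᶠ m in atTop, 0 < epsm r lam eta m :=
    (eventually_ge_atTop 2).mono fun m hm => epsm_pos hr hlam' heta hm
  have habs : ∀ᶠ m in atTop, |lam + epsm r lam eta m - lam| = epsm r lam eta m :=
    hpos.mono fun m hm => by rw [add_sub_cancel_left, abs_of_pos hm]
  have hlim := tendsto_of_abs_sub_le_epsm hr hlam (habs.mono fun _ => Eq.le)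
  refine eventually_binomial_Iio_lt (tendsto_binomialStd_muI_atTop hr hlam hlim) hG' ?_
  filter_upwards [eventually_mul_binomialStd_muI_le hr hlam heta'.le hlt habs, hpos,
    hlim.eventually (isOpen_Ioo.mem_nhds hlam'), eventually_ge_atTop 2] with m hgap hε hmem hm
  have hmono := monotoneOn_mu (hthr_pos hr hm) (Set.Ioo_subset_Icc_self hlam')
    (Set.Ioo_subset_Icc_self hmem) (le_add_of_nonneg_right hε.le)
  rwa [abs_of_nonneg (sub_nonneg.2 hmono), mul_sub] at hgap

theorem eventually_binomial_muI_sub_epsm_Ioi_lt (hr : 0 < r) (hlam : lam ∈ Set.Ioo (2 * r - 1) 1)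
    (heta : 0 < eta) {G : ℝ} (hG : gaussTail eta < G) :
    ∀ᶠ m : ℕ in atTop, Bin(ℝ, m, muI (lam - epsm r lam eta m) (hthr r m))
      (Set.Ioi (m * muM r m lam)) < ENNReal.ofReal G := by
  obtain ⟨eta', heta', hlt, hG'⟩ := exists_lt_gaussTail_lt heta hG
  have hlam' : lam ∈ Set.Ioo (-1) 1 := ⟨by linarith [hlam.1], hlam.2⟩
  have hpos : ∀ᶠ m in atTop, 0 < epsm r lam eta m :=
    (eventually_ge_atTop 2).mono fun m hm => epsm_pos hr hlam' heta hm
  have habs : ∀ᶠ m in atTop, |lam - epsm r lam eta m - lam| = epsm r lam eta m :=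
    hpos.mono fun m hm => by rw [sub_sub_cancel_left, abs_neg, abs_of_pos hm]
  have hlim := tendsto_of_abs_sub_le_epsm hr hlam (habs.mono fun _ => Eq.le)
  refine eventually_binomial_Ioi_lt (tendsto_binomialStd_muI_atTop hr hlam hlim) hG' ?_
  filter_upwards [eventually_mul_binomialStd_muI_le hr hlam heta'.le hlt habs, hpos,
    hlim.eventually (isOpen_Ioo.mem_nhds hlam'), eventually_ge_atTop 2] with m hgap hε hmem hm
  have hmono := monotoneOn_mu (hthr_pos hr hm) (Set.Ioo_subset_Icc_self hmem)
    (Set.Ioo_subset_Icc_self hlam') (sub_le_self lam hε.le)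
  rwa [abs_sub_comm, abs_of_nonneg (sub_nonneg.2 hmono), mul_sub] at hgap

theorem prob_score_lt_le {x y : Fin d → ℝ} (hm : m ≠ 0) (hx : unitVec x) (hy : unitVec y) {p : I}
    (hp : p ≤ muI (dotp x y) (hthr r m)) (c : ℝ) :
    Prob d m {ω | score d m r x y ω < c} ≤ Bin(ℝ, m, p) (Set.Iio (m * c)) := by
  have hm0 : (0 : ℝ) < m := Nat.cast_pos.2 hm.pos
  refine le_trans (le_of_eq ?_) (binomial_Iio_anti hp _)
  rw [← map_mul_score_eq_binomial m r hx hy rfl,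
    Measure.map_apply ((measurable_score m r x y).const_mul _) measurableSet_Iio]
  congr 1 with ω
  exact (mul_lt_mul_iff_right₀ hm0).symm

theorem prob_lt_score_le {x y : Fin d → ℝ} (hm : m ≠ 0) (hx : unitVec x) (hy : unitVec y) {p : I}
    (hp : muI (dotp x y) (hthr r m) ≤ p) (c : ℝ) :
    Prob d m {ω | c < score d m r x y ω} ≤ Bin(ℝ, m, p) (Set.Ioi (m * c)) := by
  have hm0 : (0 : ℝ) < m := Nat.cast_pos.2 hm.pos
  refine le_trans (le_of_eq ?_) (binomial_Ioi_mono hp _)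
  rw [← map_mul_score_eq_binomial m r hx hy rfl,
    Measure.map_apply ((measurable_score m r x y).const_mul _) measurableSet_Ioi]
  congr 1 with ω
  exact (mul_lt_mul_iff_right₀ hm0).symm

/-- The part of the event `G` that concerns a single document `x`: if `⟨x, y⟩` is outside the
window `(λ - ε_m, λ + ε_m)`, then the score of `x` is on the corresponding side of `μ_m(λ)`. -/
def goodEvent (d m : ℕ) (r lam eta : ℝ) (x y : Fin d → ℝ) : Set (Fin m → Fin d → ℝ) :=
  {ω | (lam + epsm r lam eta m ≤ dotp x y → muM r m lam ≤ score d m r x y ω) ∧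
    (dotp x y ≤ lam - epsm r lam eta m → score d m r x y ω ≤ muM r m lam)}

theorem eventually_prob_compl_goodEvent_lt (hr : 0 < r) {y : Fin d → ℝ} (hy : unitVec y)
    (hlam : lam ∈ Set.Ioo (2 * r - 1) 1) (heta : 0 < eta) {G : ℝ} (hG : gaussTail eta < G) :
    ∀ᶠ m in atTop, ∀ x, unitVec x →
      Prob d m (goodEvent d m r lam eta x y)ᶜ < ENNReal.ofReal G := by
  have hlam' : lam ∈ Set.Ioo (-1) 1 := ⟨by linarith [hlam.1], hlam.2⟩
  filter_upwards [eventually_binomial_muI_add_epsm_Iio_lt hr hlam heta hG,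
    eventually_binomial_muI_sub_epsm_Ioi_lt hr hlam heta hG, eventually_ge_atTop 2]
    with m hIio hIoi hm x hx
  have hε := epsm_pos hr hlam' heta hm
  have hdot := dotp_mem_Icc hx hy
  by_cases hhigh : lam + epsm r lam eta m ≤ dotp x y
  · have hmono := monotoneOn_mu (hthr_pos hr hm) ⟨by linarith [hlam'.1], hhigh.trans hdot.2⟩
      hdot hhigh
    refine ((measure_mono fun ω hω => ?_).trans
      (prob_score_lt_le (by lia) hx hy hmono (muM r m lam))).trans_lt hIio
    exact not_le.1 fun hle => hω ⟨fun _ => hle, fun hlow => by linarith⟩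
  by_cases hlow : dotp x y ≤ lam - epsm r lam eta m
  · have hmono := monotoneOn_mu (hthr_pos hr hm) hdot ⟨hdot.1.trans hlow, by linarith [hlam'.2]⟩
      hlow
    refine ((measure_mono fun ω hω => ?_).trans
      (prob_lt_score_le (by lia) hx hy hmono (muM r m lam))).trans_lt hIoi
    exact not_le.1 fun hle => hω ⟨fun h => absurd h hhigh, fun _ => hle⟩
  · have hempty : (goodEvent d m r lam eta x y)ᶜ = ∅ := by
      simp only [goodEvent, hhigh, hlow, false_implies, and_self, Set.ofPred_true, Set.compl_univ]
    rw [hempty, measure_empty]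
    exact ENNReal.ofReal_pos.2 ((gaussTail_nonneg eta).trans_lt hG)

theorem toReal_measure_compl_iInter_le {Ω ι : Type*} [MeasurableSpace Ω] [Fintype ι]
    {P : Measure Ω} {A : ι → Set Ω} {G : ℝ} (hG : 0 ≤ G)
    (hA : ∀ i, P (A i)ᶜ ≤ ENNReal.ofReal G) :
    (P (⋂ i, A i)ᶜ).toReal ≤ Fintype.card ι * G := by
  refine ENNReal.toReal_le_of_le_ofReal (by positivity) ?_
  calc P (⋂ i, A i)ᶜ ≤ ∑ i, P (A i)ᶜ := by
        rw [Set.compl_iInter]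
        exact measure_iUnion_fintype_le P _
    _ ≤ ∑ _i : ι, ENNReal.ofReal G := Finset.sum_le_sum fun i _ => hA i
    _ = ENNReal.ofReal (Fintype.card ι * G) := by
        rw [Finset.sum_const, Finset.card_univ, nsmul_eq_mul,
          ENNReal.ofReal_mul (Nat.cast_nonneg _), ENNReal.ofReal_natCast]

theorem stmt4_general (hr : 0 < r) {y : Fin d → ℝ} (hy : unitVec y)
    (hlam : lam ∈ Set.Ioo (2 * r - 1) 1) (heta : 0 < eta) (n : ℕ) :
    limsup (fun m : ℕ => ⨆ X : {X : Fin n → Fin d → ℝ // ∀ i, unitVec (X i)},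
      (Prob d m {ω | ∀ i : Fin n,
        (lam + epsm r lam eta m ≤ dotp (X.1 i) y → muM r m lam ≤ score d m r (X.1 i) y ω) ∧
        (dotp (X.1 i) y ≤ lam - epsm r lam eta m →
          score d m r (X.1 i) y ω ≤ muM r m lam)}ᶜ).toReal) atTop ≤ n * gaussTail eta := by
  have hlim : Tendsto (fun G : ℝ => n * G) (𝓝[>] gaussTail eta) (𝓝 (n * gaussTail eta)) :=
    (continuous_const_mul (n : ℝ)).continuousWithinAt
  refine ge_of_tendsto hlim ?_
  filter_upwards [self_mem_nhdsWithin] with G hG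
  have hG0 : 0 ≤ G := (gaussTail_nonneg eta).trans hG.le
  refine limsup_le_of_le (isCoboundedUnder_le_of_le atTop (x := 0) fun m =>
    Real.iSup_nonneg fun _ => ENNReal.toReal_nonneg) ?_
  filter_upwards [eventually_prob_compl_goodEvent_lt hr hy hlam heta hG] with m hm
  refine Real.iSup_le (fun X => ?_) (by positivity)
  rw [Set.ofPred_forall]
  simpa only [goodEvent, Fintype.card_fin] using
    toReal_measure_compl_iInter_le hG0 fun i => (hm (X.1 i) (X.2 i)).le

end GoodEvent

/-- the good event `G` holds for all corpus documents simultaneously,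
except with probability at most `n·P(N(0,1) ≥ η)` asymptotically. -/
theorem stmt4 {d : ℕ} (r : ℝ) (hr : r ∈ Set.Ioo (0 : ℝ) 1)
    (y : Fin d → ℝ) (hy : unitVec y)
    (lam : ℝ) (hlam : lam ∈ Set.Ioo (2 * r - 1) 1) (hlam0 : 0 < lam)
    (eta : ℝ) (heta : 0 < eta) (n : ℕ) :
    Filter.limsup (fun m : ℕ =>
        ⨆ X : {X : Fin n → Fin d → ℝ // ∀ i, unitVec (X i)},
          ((Prob d m)
            {ω | ∀ i : Fin n,
                (lam + epsm r lam eta m ≤ dotp (X.1 i) y → muM r m lam ≤ score d m r (X.1 i) y ω) ∧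
                (dotp (X.1 i) y ≤ lam - epsm r lam eta m → score d m r (X.1 i) y ω ≤ muM r m lam)}ᶜ).toReal)
      atTop ≤ n * gaussTail eta :=
  stmt4_general hr.1 hy hlam heta n

end
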